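/- (Spot-only equilibrium emissions.) Suppose real numbers P and q_1,…,q_n satisfy the inverse demand equation P = γ̂ − β Σ_i q_i and q_i = τ_i (P − b_i − η_i P^{CO2}) for every i, and define the spot emissions of generator i as ε_i := η_i Σ_k q_k. Then for every i, ε_i = η_i Σ_k τ_k [ φ ( γ̂ + β Σ_l τ_l (b_l + η_l P^{CO2}) ) − b_k − η_k P^{CO2} ]. -/

import Mathlib

/-- `tau β δ c i = 1 / (β (1 + δ_i) + c_i)`. -/
noncomputable def tau {n : ℕ} (β : ℝ) (δ c : Fin n → ℝ) (i : Fin n) : ℝ :=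
  1 / (β * (1 + δ i) + c i)

/-- `phi β δ c = 1 / (1 + β Σ_i τ_i)`. -/
noncomputable def phi {n : ℕ} (β : ℝ) (δ c : Fin n → ℝ) : ℝ :=
  1 / (1 + β * ∑ i, tau β δ c i)

/-- Spot-only equilibrium emissions: if `P = γ̂ − β Σ_i q_i` and
`q_i = τ_i (P − b_i − η_i P^{CO2})` for every `i`, and the spot emissions of
generator `i` are `ε_i = η_i Σ_k q_k`, then for every `i`,
`ε_i = η_i Σ_k τ_k [ φ ( γ̂ + β Σ_l τ_l (b_l + η_l P^{CO2}) ) − b_k − η_k P^{CO2} ]`. -/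
theorem stmt_9 {n : ℕ} (β γhat PCO2 P : ℝ) (b c η δ q ε : Fin n → ℝ)
    (hβ : 0 < β) (hc : ∀ i, 0 ≤ c i)
    (hpos : ∀ i, 0 < β * (1 + δ i) + c i)
    (hdemand : P = γhat - β * ∑ i, q i)
    (hfoc : ∀ i, q i = tau β δ c i * (P - b i - η i * PCO2))
    (hε : ∀ i, ε i = η i * ∑ k, q k) :
    ∀ i, ε i = η i * ∑ k, tau β δ c k *
      (phi β δ c * (γhat + β * ∑ l, tau β δ c l * (b l + η l * PCO2))
        - b k - η k * PCO2) := by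
  have hτ : 0 ≤ ∑ i, tau β δ c i :=
    Finset.sum_nonneg fun i _ => by
      unfold tau
      exact (one_div_pos.mpr (hpos i)).le
  have hS : 0 < 1 + β * ∑ i, tau β δ c i := by positivity
  have hsum : ∑ k, q k = (∑ k, tau β δ c k) * P
      - ∑ l, tau β δ c l * (b l + η l * PCO2) := by
    rw [Finset.sum_mul, ← Finset.sum_sub_distrib]
    refine Finset.sum_congr rfl fun k _ => ?_
    rw [hfoc k]
    ring
  have hP : phi β δ c * (γhat + β * ∑ l, tau β δ c l * (b l + η l * PCO2)) = P := by
    unfold phi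
    rw [one_div, inv_mul_eq_iff_eq_mul₀ hS.ne']
    rw [hsum] at hdemand
    linarith
  intro i
  rw [hP, hε i]
  congr 1
  exact Finset.sum_congr rfl fun k _ => hfoc k
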